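/- Let p ≡ 1 (mod 3) be a prime such that 2 is a cube modulo p, and let C_p be the smooth plane cubic curve x^3 + y^3 + z^3 = 0 over F_p. Then dim_{F_2} Pic^0(C_p)/2Pic^0(C_p) = 2, and each of the 4 elements of Pic^0(C_p)/2Pic^0(C_p) is represented by the class of P − O for some P ∈ C_p(F_p), where O = (1:−1:0). Equivalently, the elliptic curve E: y^2 + y = x^3 − 7 over F_p (a Weierstrass model of (C_p, O)) has full 2-torsion over F_p, i.e. E(F_p)[2] ≅ Z/2Z × Z/2Z. -/

import Mathlib

/- Common framework: points, lines, intersection divisors, the secant-tangent span,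
the groups `H_S(K)`, geometric notions over the algebraic closure, and topologies. -/

open MvPolynomial

noncomputable section

namespace CubicSurf

variable {K L : Type*} [Field K] [Field L] {n : ℕ}

/-- The set of `K`-rational points of the projective hypersurface `F = 0`. -/
def zeroSet (F : MvPolynomial (Fin n) K) : Set (Projectivization K (Fin n → K)) :=
  {P | eval P.rep F = 0}

/-- The binary form obtained by restricting `F` to the line spanned by `u` and `v`,
via the parametrization `(s : t) ↦ s • u + t • v`. -/
def lineRestrict (F : MvPolynomial (Fin n) K) (u v : Fin n → K) : MvPolynomial (Fin 2) K :=
  aeval (fun i => C (u i) * X 0 + C (v i) * X 1) F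

/-- A projective line: a 2-dimensional linear subspace of `K^n`. -/
def IsLine (W : Submodule K (Fin n → K)) : Prop := Module.finrank K W = 2

/-- The line `W` lies (geometrically) on the hypersurface `F = 0`. -/
def LineOnSurf (F : MvPolynomial (Fin n) K) (W : Submodule K (Fin n → K)) : Prop :=
  ∀ u v : Fin n → K, u ∈ W → v ∈ W → lineRestrict F u v = 0

/-- The projective point `P` lies on the line `W`. -/
def OnLine (W : Submodule K (Fin n → K)) (P : Projectivization K (Fin n → K)) : Prop :=
  P.rep ∈ W

/-- The set of `K`-points of the line `W`. -/
def linePts (W : Submodule K (Fin n → K)) : Set (Projectivization K (Fin n → K)) :=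
  {P | OnLine W P}

/-- `ℓ · S = P + Q + R`: the intersection divisor (with multiplicities) of the line `W`
with the hypersurface `F = 0` is `P + Q + R`. -/
def MeetsIn (F : MvPolynomial (Fin n) K) (W : Submodule K (Fin n → K))
    (P Q R : Projectivization K (Fin n → K)) : Prop :=
  ∃ (u v : Fin n → K) (_ : u ∈ W) (_ : v ∈ W) (_ : LinearIndependent K ![u, v])
    (c : K) (l m : Fin 3 → K) (h : ∀ k, l k • u + m k • v ≠ 0),
      c ≠ 0 ∧
      lineRestrict F u v = C c * ∏ k : Fin 3, (C (m k) * X 0 - C (l k) * X 1) ∧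
      Projectivization.mk K _ (h 0) = P ∧
      Projectivization.mk K _ (h 1) = Q ∧
      Projectivization.mk K _ (h 2) = R

/-- Membership in the span of a set of points under the secant/tangent process:
the smallest subset of `S(K)` containing `B` such that whenever `P`, `Q` are in it and a
`K`-line `ℓ ⊄ S` satisfies `ℓ·S = P+Q+R` with `R ∈ S(K)`, then `R` is in it. -/
inductive SpanMem (F : MvPolynomial (Fin n) K) (B : Set (Projectivization K (Fin n → K))) :
    Projectivization K (Fin n → K) → Prop
  | base (P : Projectivization K (Fin n → K)) (hP : P ∈ B) : SpanMem F B P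
  | secant (P Q R : Projectivization K (Fin n → K)) (W : Submodule K (Fin n → K))
      (hW : IsLine W) (hWS : ¬ LineOnSurf F W) (hP : SpanMem F B P) (hQ : SpanMem F B Q)
      (hR : R ∈ zeroSet F) (hm : MeetsIn F W P Q R) : SpanMem F B R

/-- The span of a set of points under the secant/tangent process. -/
def Span (F : MvPolynomial (Fin n) K) (B : Set (Projectivization K (Fin n → K))) :
    Set (Projectivization K (Fin n → K)) :=
  {P | SpanMem F B P}

/-- Smoothness of the projective hypersurface `F = 0`: over the algebraic closure there is
no nonzero common zero of `F` and all of its partial derivatives. -/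
def IsSmoothHypersurf (F : MvPolynomial (Fin n) K) : Prop :=
  ∀ v : Fin n → AlgebraicClosure K,
    eval v (MvPolynomial.map (algebraMap K (AlgebraicClosure K)) F) = 0 →
    (∀ i, eval v (pderiv i (MvPolynomial.map (algebraMap K (AlgebraicClosure K)) F)) = 0) →
    v = 0

/-- A smooth cubic hypersurface. -/
def SmoothCubic (F : MvPolynomial (Fin n) K) : Prop :=
  F.IsHomogeneous 3 ∧ IsSmoothHypersurf F

/-- The linear form cutting out the tangent plane `Π_P` of `F = 0` at `P`,
evaluated at the representative of a point `Q`; `Q ∈ Π_P` iff this vanishes. -/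
def tangentEval (F : MvPolynomial (Fin n) K) (P Q : Projectivization K (Fin n → K)) : K :=
  ∑ i, eval P.rep (pderiv i F) * Q.rep i

/-- The set of `K`-points of the tangent plane `Π_P`. -/
def tangentPlanePts (F : MvPolynomial (Fin n) K) (P : Projectivization K (Fin n → K)) :
    Set (Projectivization K (Fin n → K)) :=
  {Q | tangentEval F P Q = 0}

/-- The set of `K`-points of `Γ_P = S ∩ Π_P`. -/
def GammaPts (F : MvPolynomial (Fin n) K) (P : Projectivization K (Fin n → K)) :
    Set (Projectivization K (Fin n → K)) :=
  zeroSet F ∩ tangentPlanePts F P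

/-! ### Base change along a field embedding -/

/-- Base change of a vector along a field embedding. -/
def clVec (φ : K →+* L) (v : Fin n → K) : Fin n → L := fun i => φ (v i)

lemma clVec_ne_zero (φ : K →+* L) {v : Fin n → K} (hv : v ≠ 0) : clVec φ v ≠ 0 := by
  intro h
  apply hv
  funext i
  have := congrFun h i
  simpa [clVec] using φ.injective (by simpa [clVec] using this)

/-- Base change of a projective point along a field embedding. -/
def clPt (φ : K →+* L) (P : Projectivization K (Fin n → K)) :
    Projectivization L (Fin n → L) :=
  Projectivization.mk L (clVec φ P.rep) (clVec_ne_zero φ P.rep_nonzero)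

lemma eval_smul_of_isHomogeneous {R : Type*} [CommSemiring R] {F : MvPolynomial (Fin n) R}
    {d : ℕ} (hF : F.IsHomogeneous d) (a : R) (w : Fin n → R) :
    eval (a • w) F = a ^ d * eval w F := by
  classical
  rw [eval_eq', eval_eq', Finset.mul_sum]
  refine Finset.sum_congr rfl fun s hs => ?_
  have hdeg : ∑ i, s i = d := by
    have h1 := hF (MvPolynomial.mem_support_iff.mp hs)
    rw [Finsupp.weight_apply] at h1
    rw [← h1, Finsupp.sum_fintype]
    · simp
    · intro i; simp
  have key : ∀ i : Fin n, (a • w) i ^ s i = a ^ s i * w i ^ s i := by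
    intro i; simp [mul_pow]
  rw [Finset.prod_congr rfl (fun i _ => key i), Finset.prod_mul_distrib,
    Finset.prod_pow_eq_pow_sum, hdeg]
  ring

lemma clVec_eval (φ : K →+* L) (F : MvPolynomial (Fin n) K) (v : Fin n → K) :
    eval (clVec φ v) (MvPolynomial.map φ F) = φ (eval v F) := by
  rw [eval_map]
  have h : φ (eval v F) = φ (eval₂Hom (RingHom.id K) v F) := rfl
  rw [h, map_eval₂Hom]
  rfl

/-- A point given by a vector on which a homogeneous `F` vanishes lies in the zero set. -/
lemma mk_mem_zeroSet {F : MvPolynomial (Fin n) K} {d : ℕ} (hF : F.IsHomogeneous d)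
    {v : Fin n → K} (hv : v ≠ 0) (h : eval v F = 0) :
    Projectivization.mk K v hv ∈ zeroSet F := by
  obtain ⟨a, ha⟩ := Projectivization.exists_smul_eq_mk_rep K v hv
  show eval (Projectivization.mk K v hv).rep F = 0
  have hrep : (Projectivization.mk K v hv).rep = (a : K) • v := by
    rw [← ha, Units.smul_def]
  rw [hrep, eval_smul_of_isHomogeneous hF, h, mul_zero]

lemma clPt_mem_zeroSet (φ : K →+* L) {F : MvPolynomial (Fin n) K} {d : ℕ}
    (hF : F.IsHomogeneous d) {P : Projectivization K (Fin n → K)} (hP : P ∈ zeroSet F) :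
    clPt φ P ∈ zeroSet (MvPolynomial.map φ F) := by
  apply mk_mem_zeroSet (hF.map φ)
  rw [clVec_eval, hP, map_zero]

/-- The induced map on points of `S` under base change of the field. -/
def ptMap (φ : K →+* L) {F : MvPolynomial (Fin n) K} {d : ℕ} (hF : F.IsHomogeneous d)
    (P : zeroSet F) : zeroSet (MvPolynomial.map φ F) :=
  ⟨clPt φ P.1, clPt_mem_zeroSet φ hF P.2⟩

/-- A subspace of `L^n` is defined over `K` (w.r.t. `φ : K →+* L`) if it is spanned by
the base change of a `K`-subspace. -/
def DefinedOver (φ : K →+* L) (W : Submodule L (Fin n → L)) : Prop :=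
  ∃ W₀ : Submodule K (Fin n → K), W = Submodule.span L (clVec φ '' (W₀ : Set (Fin n → K)))

/-! ### Asymptotic lines, parabolic points, Eckardt points -/

/-- The line `W` is asymptotic to `F = 0` at `P`: the intersection multiplicity
`(ℓ · S)_P` is at least 3. -/
def AsymptoticAt (F : MvPolynomial (Fin n) K) (W : Submodule K (Fin n → K))
    (P : Projectivization K (Fin n → K)) : Prop :=
  IsLine W ∧ P.rep ∈ W ∧
    ∃ v ∈ W, LinearIndependent K ![P.rep, v] ∧
      ∃ c : K, lineRestrict F P.rep v = C c * (X 1) ^ 3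

/-- The set of asymptotic lines at `P`. -/
def AsymSet (F : MvPolynomial (Fin n) K) (P : Projectivization K (Fin n → K)) :
    Set (Submodule K (Fin n → K)) :=
  {W | AsymptoticAt F W P}

/-- A point of a hypersurface is parabolic (relative to the given field) if it does
not have exactly two distinct asymptotic lines (i.e. it has one or infinitely many). -/
def ParabolicAt (F : MvPolynomial (Fin n) K) (P : Projectivization K (Fin n → K)) : Prop :=
  ¬ ∃ W₁ W₂ : Submodule K (Fin n → K), W₁ ≠ W₂ ∧ AsymSet F P = {W₁, W₂}

/-- An Eckardt point (relative to the given field): three distinct lines lying on the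
surface pass through `P`. -/
def EckardtAt (F : MvPolynomial (Fin n) K) (P : Projectivization K (Fin n → K)) : Prop :=
  ∃ W₁ W₂ W₃ : Submodule K (Fin n → K), W₁ ≠ W₂ ∧ W₁ ≠ W₃ ∧ W₂ ≠ W₃ ∧
    (∀ W ∈ ({W₁, W₂, W₃} : Set (Submodule K (Fin n → K))),
      IsLine W ∧ LineOnSurf F W ∧ OnLine W P)

section geometric

variable (F : MvPolynomial (Fin n) K)

/-- `F` base changed to the algebraic closure of `K`. -/
def clF : MvPolynomial (Fin n) (AlgebraicClosure K) :=
  MvPolynomial.map (algebraMap K (AlgebraicClosure K)) F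

/-- A `K`-point of `S` is parabolic (a geometric notion, checked over `K̄`). -/
def IsParabolic (P : Projectivization K (Fin n → K)) : Prop :=
  ParabolicAt (clF F) (clPt (algebraMap K (AlgebraicClosure K)) P)

/-- A `K`-point of `S` is an Eckardt point (a geometric notion, checked over `K̄`). -/
def IsEckardt (P : Projectivization K (Fin n → K)) : Prop :=
  EckardtAt (clF F) (clPt (algebraMap K (AlgebraicClosure K)) P)

/-- A `K`-point of `S` is `K`-hyperbolic: it has exactly two asymptotic lines over `K̄`,
and both are defined over `K`. -/
def IsHyperbolic (P : Projectivization K (Fin n → K)) : Prop :=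
  ∃ W₁ W₂, W₁ ≠ W₂ ∧
    AsymSet (clF F) (clPt (algebraMap K (AlgebraicClosure K)) P) = {W₁, W₂} ∧
    DefinedOver (algebraMap K (AlgebraicClosure K)) W₁ ∧
    DefinedOver (algebraMap K (AlgebraicClosure K)) W₂

/-- A `K`-point of `S` is `K`-ternary: at least one of the asymptotic lines of `S`
through `P` is defined over `K`. -/
def IsTernary (P : Projectivization K (Fin n → K)) : Prop :=
  ∃ W ∈ AsymSet (clF F) (clPt (algebraMap K (AlgebraicClosure K)) P),
    DefinedOver (algebraMap K (AlgebraicClosure K)) W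

end geometric

/-! ### The group `H_S(K)` -/

variable (F : MvPolynomial (Fin n) K)

/-- `G_S(K)`: the free abelian group on the set `S(K)`. -/
abbrev GS := FreeAbelianGroup (zeroSet F)

/-- The degree homomorphism `G_S(K) → ℤ`, `Σ aᵢ Pᵢ ↦ Σ aᵢ`. -/
def degHom : GS F →+ ℤ := FreeAbelianGroup.lift fun _ => (1 : ℤ)

/-- `P + Q + R` is a "three point sum": either cut out on `S` with multiplicity by a
`K`-line not contained in `S`, or `P`, `Q`, `R` all lie on a `K`-line contained in `S`. -/
def TripleRel (P Q R : zeroSet F) : Prop :=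
  ∃ W : Submodule K (Fin n → K), IsLine W ∧
    ((¬ LineOnSurf F W ∧ MeetsIn F W P.1 Q.1 R.1) ∨
      (LineOnSurf F W ∧ OnLine W P.1 ∧ OnLine W Q.1 ∧ OnLine W R.1))

/-- `G'_S(K)`: the subgroup generated by all three point sums. -/
def Gp : AddSubgroup (GS F) :=
  AddSubgroup.closure {x | ∃ P Q R : zeroSet F, TripleRel F P Q R ∧
    x = FreeAbelianGroup.of P + FreeAbelianGroup.of Q + FreeAbelianGroup.of R}

/-- `G''_S(K)`: the degree-0 part of `G'_S(K)`. -/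
def Gpp : AddSubgroup (GS F) := Gp F ⊓ (degHom F).ker

/-- `H_S(K) = G_S(K)/G''_S(K)`. -/
abbrev HS := GS F ⧸ Gpp F

/-- The class `[P] ∈ H_S(K)` of a point `P ∈ S(K)`. -/
def HClass (P : zeroSet F) : HS F := QuotientAddGroup.mk' (Gpp F) (FreeAbelianGroup.of P)

/-- The degree homomorphism `H_S(K) → ℤ`. -/
def HdegHom : HS F →+ ℤ :=
  QuotientAddGroup.lift (Gpp F) (degHom F) (fun _ hx => hx.2)

/-- `H⁰_S(K)`: the degree-0 part of `H_S(K)`. -/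
def H0 : AddSubgroup (HS F) := (HdegHom F).ker

@[simp] lemma HdegHom_HClass (P : zeroSet F) : HdegHom F (HClass F P) = 1 := by
  simp [HdegHom, HClass, degHom]

/-- The class `[P] - [Q]`, as an element of `H⁰_S(K)`. -/
def H0diff (P Q : zeroSet F) : H0 F :=
  ⟨HClass F P - HClass F Q, by simp [H0, AddMonoidHom.mem_ker, map_sub]⟩

/-! ### mod-`p` dimensions and torsion -/

/-- `A/pA` for an abelian group `A`. -/
abbrev ModP (p : ℕ) (A : Type*) [AddCommGroup A] : Type _ :=
  A ⧸ (AddMonoidHom.range (nsmulAddMonoidHom p : A →+ A))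

instance ModP.instModule (p : ℕ) (A : Type*) [AddCommGroup A] : Module (ZMod p) (ModP p A) :=
  QuotientAddGroup.zmodModule (fun x => ⟨x, rfl⟩)

/-- `dim_{F_p} A/pA`. -/
def dimModP (p : ℕ) (A : Type*) [AddCommGroup A] : Cardinal := Module.rank (ZMod p) (ModP p A)

/-- The `k`-torsion subgroup `A[k]` of an abelian group `A`. -/
def torsion (k : ℕ) (A : Type*) [AddCommGroup A] : AddSubgroup A :=
  (nsmulAddMonoidHom k : A →+ A).ker

instance torsion.instModule (k : ℕ) (A : Type*) [AddCommGroup A] :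
    Module (ZMod k) (torsion k A) :=
  AddCommGroup.zmodModule (fun x => Subtype.ext x.2)

/-- `dim_{F_k} A[k]`: the dimension of the `k`-torsion subgroup (for `k` prime). -/
def dimTorsion (k : ℕ) (A : Type*) [AddCommGroup A] : Cardinal :=
  Module.rank (ZMod k) (torsion k A)

/-! ### Topologies -/

/-- The quotient topology on projective space induced by the topology of `K`. -/
def projTop (K : Type*) [Field K] [TopologicalSpace K] (n : ℕ) :
    TopologicalSpace (Projectivization K (Fin n → K)) :=
  TopologicalSpace.coinduced
    (fun v : {v : Fin n → K // v ≠ 0} => Projectivization.mk K v.1 v.2) inferInstance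

/-- The induced topology on the set of `K`-points of `S`. -/
def surfTop (F : MvPolynomial (Fin n) K) [TopologicalSpace K] :
    TopologicalSpace (zeroSet F) :=
  TopologicalSpace.induced Subtype.val (projTop K n)

/-- `K` (a topological field) is a local field: it is isomorphic, as a topological field,
to `ℝ`, to `ℂ`, or to a finite extension of `ℚ_p` for some prime `p` (with its canonical
topology, namely the `ℚ_p`-vector space topology). -/
def IsLocalField (K : Type*) [Field K] [TopologicalSpace K] : Prop :=
  (∃ e : K ≃+* ℝ, IsHomeomorph e) ∨ (∃ e : K ≃+* ℂ, IsHomeomorph e) ∨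
    (∃ (p : ℕ), p.Prime ∧ ∃ (_ : Fact p.Prime) (f : ℚ_[p] →+* K) (m : ℕ)
      (e : K ≃+ (Fin m → ℚ_[p])),
      (∀ (c : ℚ_[p]) (x : K), e (f c * x) = c • e x) ∧ IsHomeomorph e)

end CubicSurf

namespace CubicSurf

open MvPolynomial

variable (p : ℕ) [Fact p.Prime]

/-- The plane cubic curve `C_p : x³ + y³ + z³ = 0` over `F_p`. -/
def Gcubic : MvPolynomial (Fin 3) (ZMod p) := X 0 ^ 3 + X 1 ^ 3 + X 2 ^ 3

lemma Gcubic_hom : (Gcubic p).IsHomogeneous 3 := by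
  have h : ∀ i : Fin 3, ((X i : MvPolynomial (Fin 3) (ZMod p)) ^ 3).IsHomogeneous 3 :=
    fun i => by simpa using (isHomogeneous_X _ i).pow 3
  exact ((h 0).add (h 1)).add (h 2)

lemma O_ne_zero : (![1, -1, 0] : Fin 3 → ZMod p) ≠ 0 := by
  intro h
  have h0 := congrFun h 0
  simp at h0

lemma O_eval : eval (![1, -1, 0] : Fin 3 → ZMod p) (Gcubic p) = 0 := by
  simp [Gcubic]
  ring

/-- The flex `O = (1 : -1 : 0)` on `C_p`. -/
def OPt : zeroSet (Gcubic p) :=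
  ⟨Projectivization.mk (ZMod p) ![1, -1, 0] (O_ne_zero p),
    mk_mem_zeroSet (Gcubic_hom p) (O_ne_zero p) (O_eval p)⟩

/-- Note: for the plane cubic `C_p` with the rational point `O`, the group
`H_{C_p}(F_p)` built from collinearity relations computes `Pic(C_p)`, and its degree-0
part `H⁰` computes `Pic⁰(C_p)`. -/
abbrev PicC := HS (Gcubic p)

/-- `Pic⁰(C_p)`. -/
abbrev Pic0C : AddSubgroup (PicC p) := H0 (Gcubic p)

end CubicSurf

/-!
On any cubic, the residual point of the line through two points (tangents included) turns
sums and differences of point classes into single point classes, so with `O` fixed every class of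
degree zero is `[P] - [O]`. For a Weierstrass cubic, collinear points add up to zero in `E(K)`;
hence the point classes map to `E(K)`, and `[P] - [O] ↦ P` is an isomorphism `Pic⁰ ≃ E(K)`.
A linear change of coordinates carries `x³ + y³ + z³ = 0` to `y² + y = x³ - 7`.

A finite abelian group `A` has `|A/2A| = |A[2]|`. The points of order two on `y² + y = x³ - 7` have
as abscissas the roots of `4x³ - 27`, which splits as soon as `2` is a cube and `K` has a primitive
cube root of unity; the latter exists when `|K| ≡ 1 (mod 3)`.
-/

namespace CubicSurf

/-! ### Restriction of a form to a line -/

section Lines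

variable {K : Type*} [Field K] {n : ℕ} {F : MvPolynomial (Fin n) K}

lemma eval_lineRestrict (F : MvPolynomial (Fin n) K) (u v : Fin n → K) (w : Fin 2 → K) :
    eval w (lineRestrict F u v) = eval (w 0 • u + w 1 • v) F := by
  induction F using MvPolynomial.induction_on with
  | C a => simp [lineRestrict]
  | add p q hp hq => simp_all [lineRestrict]
  | mul_X p i hp => simp_all [lineRestrict, mul_comm]

lemma aeval_lineRestrict (F : MvPolynomial (Fin n) K) (u v : Fin n → K) (α β γ δ : K) :
    aeval ![C α * X 0 + C γ * X 1, C β * X 0 + C δ * X 1] (lineRestrict F u v) =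
      lineRestrict F (α • u + β • v) (γ • u + δ • v) := by
  simp only [lineRestrict, ← AlgHom.comp_apply]
  congr 1
  ext i : 1
  simp only [AlgHom.comp_apply, aeval_X, map_add, map_mul, algHom_C, algebraMap_eq,
    Matrix.cons_val_zero, Matrix.cons_val_one, Pi.add_apply, Pi.smul_apply, smul_eq_mul]
  ring

lemma isHomogeneous_lineRestrict {d : ℕ} (hF : F.IsHomogeneous d) (u v : Fin n → K) :
    (lineRestrict F u v).IsHomogeneous d := by
  have h := hF.aeval (fun i ↦ C (u i) * X 0 + C (v i) * X 1 : Fin n → MvPolynomial (Fin 2) K)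
    fun i ↦ (isHomogeneous_C_mul_X (u i) 0).add (isHomogeneous_C_mul_X (v i) 1)
  rwa [one_mul] at h

lemma pderiv_one_lineRestrict (F : MvPolynomial (Fin n) K) (u v : Fin n → K) :
    pderiv 1 (lineRestrict F u v) = ∑ i, lineRestrict (pderiv i F) u v * C (v i) := by
  induction F using MvPolynomial.induction_on with
  | C a => simp [lineRestrict]
  | add p q hp hq =>
    simp only [lineRestrict, map_add, add_mul, Finset.sum_add_distrib] at hp hq ⊢
    rw [hp, hq]
  | mul_X p i hp =>
    have hX : ∑ j, lineRestrict (pderiv j (X i)) u v * C (v j) = C (v i) := by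
      simp [lineRestrict, pderiv_X, Pi.single_apply, apply_ite, ite_mul]
    simp only [lineRestrict, map_mul, aeval_X, Derivation.leibniz, smul_eq_mul, map_add,
      pderiv_C, pderiv_X_self, pderiv_X_of_ne zero_ne_one, add_mul, Finset.sum_add_distrib,
      mul_assoc, ← Finset.mul_sum] at hp hX ⊢
    rw [hp, hX]
    ring

lemma onLine_mk {W : Submodule K (Fin n → K)} {v : Fin n → K} (hv : v ≠ 0) :
    OnLine W (Projectivization.mk K v hv) ↔ v ∈ W := by
  obtain ⟨a, ha⟩ := Projectivization.exists_smul_eq_mk_rep K v hv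
  rw [OnLine, ← ha, Units.smul_def, W.smul_mem_iff a.ne_zero]

lemma isLine_span_pair {u v : Fin n → K} (h : LinearIndependent K ![u, v]) :
    IsLine (Submodule.span K {u, v}) := by
  have := finrank_span_eq_card h
  rwa [Matrix.range_cons_cons_empty, Fintype.card_fin] at this

lemma IsLine.eq_span_pair {W : Submodule K (Fin n → K)} (hW : IsLine W) {u v : Fin n → K}
    (hu : u ∈ W) (hv : v ∈ W) (h : LinearIndependent K ![u, v]) :
    W = Submodule.span K {u, v} :=
  (Submodule.eq_of_le_of_finrank_eq (Submodule.span_le.2 (Set.pair_subset hu hv))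
    ((isLine_span_pair h).trans hW.symm)).symm

lemma lineOnSurf_span_pair {u v : Fin n → K} (h : lineRestrict F u v = 0) :
    LineOnSurf F (Submodule.span K {u, v}) := by
  intro u' v' hu' hv'
  obtain ⟨α, β, rfl⟩ := Submodule.mem_span_pair.1 hu'
  obtain ⟨γ, δ, rfl⟩ := Submodule.mem_span_pair.1 hv'
  rw [← aeval_lineRestrict, h, map_zero]

/-- The form `F`, restricted to the line through `u` and `v`, is a nonzero multiple of the product
of three linear forms vanishing at `P`, `Q` and `R`: the condition of `MeetsIn` for one
parametrization of the line. -/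
def MeetsAlong (F : MvPolynomial (Fin n) K) (u v : Fin n → K)
    (P Q R : Projectivization K (Fin n → K)) : Prop :=
  ∃ (c : K) (l m : Fin 3 → K) (h : ∀ k, l k • u + m k • v ≠ 0), c ≠ 0 ∧
    lineRestrict F u v = C c * ∏ k : Fin 3, (C (m k) * X 0 - C (l k) * X 1) ∧
    Projectivization.mk K _ (h 0) = P ∧ Projectivization.mk K _ (h 1) = Q ∧
    Projectivization.mk K _ (h 2) = R

lemma MeetsAlong.meetsIn {u v : Fin n → K} {P Q R : Projectivization K (Fin n → K)}
    (h : MeetsAlong F u v P Q R) (huv : LinearIndependent K ![u, v]) :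
    MeetsIn F (Submodule.span K {u, v}) P Q R :=
  ⟨u, v, Submodule.mem_span_pair.2 ⟨1, 0, by simp⟩, Submodule.mem_span_pair.2 ⟨0, 1, by simp⟩,
    huv, h⟩

lemma MeetsAlong.change_basis {u v : Fin n → K} {P Q R : Projectivization K (Fin n → K)}
    (h : MeetsAlong F u v P Q R) {α β γ δ : K} (hD : α * δ - β * γ ≠ 0) :
    MeetsAlong F (α • u + β • v) (γ • u + δ • v) P Q R := by
  obtain ⟨c, l, m, h₀, hc, hfac, rfl, rfl, rfl⟩ := h
  have hpt (k : Fin 3) : (l k * δ - m k * γ) • (α • u + β • v) +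
      (m k * α - l k * β) • (γ • u + δ • v) = (α * δ - β * γ) • (l k • u + m k • v) := by
    module
  have hne (k : Fin 3) : (l k * δ - m k * γ) • (α • u + β • v) +
      (m k * α - l k * β) • (γ • u + δ • v) ≠ 0 := by
    rw [hpt]
    exact smul_ne_zero hD (h₀ k)
  have hmk (k : Fin 3) : Projectivization.mk K _ (hne k) = Projectivization.mk K _ (h₀ k) :=
    (Projectivization.mk_eq_mk_iff' K _ _ _ _).2 ⟨α * δ - β * γ, (hpt k).symm⟩
  refine ⟨c, fun k ↦ l k * δ - m k * γ, fun k ↦ m k * α - l k * β, hne, hc, ?_,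
    hmk 0, hmk 1, hmk 2⟩
  rw [← aeval_lineRestrict, hfac]
  simp only [map_mul, map_prod, map_sub, algHom_C, aeval_X, algebraMap_eq,
    Matrix.cons_val_zero, Matrix.cons_val_one]
  refine congrArg _ (Finset.prod_congr rfl fun k _ ↦ ?_)
  ring

lemma MeetsIn.meetsAlong {W : Submodule K (Fin n → K)} (hW : IsLine W)
    {P Q R : Projectivization K (Fin n → K)} (h : MeetsIn F W P Q R) {u v : Fin n → K}
    (hu : u ∈ W) (hv : v ∈ W) (huv : LinearIndependent K ![u, v]) : MeetsAlong F u v P Q R := by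
  obtain ⟨u₀, v₀, hu₀, hv₀, huv₀, h⟩ := h
  rw [hW.eq_span_pair hu₀ hv₀ huv₀] at hu hv
  obtain ⟨α, β, rfl⟩ := Submodule.mem_span_pair.1 hu
  obtain ⟨γ, δ, rfl⟩ := Submodule.mem_span_pair.1 hv
  have hD : α * δ ≠ β * γ := ((LinearIndependent.pair_add_smul_add_smul_iff ..).1 huv).2
  exact MeetsAlong.change_basis h (sub_ne_zero.2 hD)

end Lines

section BinaryCubic

lemma exists_binary_cubic_eq {R : Type*} [CommSemiring R] {q : MvPolynomial (Fin 2) R}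
    (hq : q.IsHomogeneous 3) :
    ∃ a b c d : R, q = C a * X 0 ^ 3 + C b * X 0 ^ 2 * X 1 + C c * X 0 * X 1 ^ 2 +
      C d * X 1 ^ 3 := by
  obtain ⟨p, hp⟩ : ∃ p : Polynomial R, aeval ![Polynomial.X, 1] q = p := ⟨_, rfl⟩
  have h := Polynomial.homogenize_eq_of_isHomogeneous hq hp
  refine ⟨p.coeff 3, p.coeff 2, p.coeff 1, p.coeff 0, ?_⟩
  rw [← h, Polynomial.homogenize]
  simp only [Finset.Nat.antidiagonal_succ, Finset.Nat.antidiagonal_zero, Finset.sum_cons,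
    Finset.map_singleton, Finset.map_cons, Finset.sum_singleton, monomial_fin_two]
  simp
  ring

lemma coeff_eq_of_binary_cubic_eq {R : Type*} [CommRing R] {a b c d e : R} {l m : Fin 3 → R}
    (h : C a * X 0 ^ 3 + C b * X 0 ^ 2 * X 1 + C c * X 0 * X 1 ^ 2 + C d * X 1 ^ 3 =
      C e * ∏ k : Fin 3, (C (m k) * X 0 - C (l k) * X (1 : Fin 2))) :
    a = e * (m 0 * m 1 * m 2) ∧
      b = -(e * (l 0 * m 1 * m 2 + m 0 * l 1 * m 2 + m 0 * m 1 * l 2)) ∧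
      c = e * (l 0 * l 1 * m 2 + l 0 * m 1 * l 2 + m 0 * l 1 * l 2) ∧
      d = -(e * (l 0 * l 1 * l 2)) := by
  have hcubic : Cubic.toPoly ⟨a, b, c, d⟩ = Cubic.toPoly
      ⟨e * (m 0 * m 1 * m 2), -(e * (l 0 * m 1 * m 2 + m 0 * l 1 * m 2 + m 0 * m 1 * l 2)),
        e * (l 0 * l 1 * m 2 + l 0 * m 1 * l 2 + m 0 * l 1 * l 2), -(e * (l 0 * l 1 * l 2))⟩ := by
    have := congrArg (aeval (![.X, 1] : Fin 2 → Polynomial R)) h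
    simp only [map_add, map_sub, map_mul, map_pow, algHom_C, aeval_X, Fin.prod_univ_three,
      Polynomial.algebraMap_eq, Matrix.cons_val_zero, Matrix.cons_val_one] at this
    simp only [Cubic.toPoly, map_add, map_mul, map_neg]
    linear_combination this
  simpa only [Cubic.mk.injEq] using (Cubic.toPoly_injective _ _).1 hcubic

end BinaryCubic

/-! ### Residual intersection points -/

section ResidualPoint

variable {K : Type*} [Field K] {n : ℕ} {F : MvPolynomial (Fin n) K}

lemma lineRestrict_eq_of_eval_eq_zero (hF : F.IsHomogeneous 3) {u : Fin n → K}
    (hu : eval u F = 0) (v : Fin n → K) :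
    ∃ c : K, lineRestrict F u v = C (∑ i, eval u (pderiv i F) * v i) * X 0 ^ 2 * X 1 +
      C c * X 0 * X 1 ^ 2 + C (eval v F) * X 1 ^ 3 := by
  obtain ⟨a, b, c, d, h⟩ := exists_binary_cubic_eq (isHomogeneous_lineRestrict hF u v)
  have ha : a = eval u F := by simpa [h] using eval_lineRestrict F u v ![1, 0]
  have hd : d = eval v F := by simpa [h] using eval_lineRestrict F u v ![0, 1]
  have hb : b = ∑ i, eval u (pderiv i F) * v i := by
    have := congrArg (eval ![1, 0]) (pderiv_one_lineRestrict F u v)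
    simpa [h, eval_lineRestrict, pderiv_X_of_ne] using this
  exact ⟨c, by simp [h, ha, hu, hb, hd]⟩

lemma exists_tangent_direction (F : MvPolynomial (Fin n) K) (hn : 3 ≤ n) {u : Fin n → K}
    (hu : u ≠ 0) :
    ∃ v : Fin n → K, LinearIndependent K ![u, v] ∧ ∑ i, eval u (pderiv i F) * v i = 0 := by
  let T : (Fin n → K) →ₗ[K] K := ∑ i, eval u (pderiv i F) • LinearMap.proj i
  have hT : 1 < Module.finrank K (LinearMap.ker T) := by
    have h₁ := T.finrank_range_add_finrank_ker
    have h₂ := (LinearMap.range T).finrank_le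
    rw [Module.finrank_fin_fun] at h₁
    rw [Module.finrank_self] at h₂
    omega
  obtain ⟨v, hv, hvu⟩ : ∃ v ∈ LinearMap.ker T, v ∉ Submodule.span K {u} := by
    refine SetLike.not_le_iff_exists.1 fun hle ↦ hT.not_ge ?_
    exact (Submodule.finrank_mono hle).trans (finrank_span_singleton hu).le
  refine ⟨v, (LinearIndependent.pair_iff' hu).2 fun a ha ↦ hvu ?_, by simpa [T] using hv⟩
  exact Submodule.mem_span_singleton.2 ⟨a, ha⟩

lemma tripleRel_of_meetsAlong {u v : Fin n → K} (huv : LinearIndependent K ![u, v])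
    (h₀ : lineRestrict F u v ≠ 0) {P Q R : zeroSet F} (h : MeetsAlong F u v P.1 Q.1 R.1) :
    TripleRel F P Q R :=
  ⟨_, isLine_span_pair huv, .inl ⟨fun hW ↦ h₀ (hW u v (Submodule.mem_span_pair.2 ⟨1, 0, by simp⟩)
    (Submodule.mem_span_pair.2 ⟨0, 1, by simp⟩)), h.meetsIn huv⟩⟩

lemma smul_add_smul_ne_zero {u v : Fin n → K} (huv : LinearIndependent K ![u, v]) {s t : K}
    (hst : s ≠ 0 ∨ t ≠ 0) : s • u + t • v ≠ 0 := fun h ↦ by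
  obtain ⟨rfl, rfl⟩ := LinearIndependent.pair_iff.1 huv s t h
  simp at hst

lemma exists_tripleRel_of_lineRestrict_eq {d : ℕ} (hF : F.IsHomogeneous d) {u v : Fin n → K}
    (huv : LinearIndependent K ![u, v]) {P Q : zeroSet F} {l₀ m₀ l₁ m₁ e f : K}
    (hP : ∃ h, Projectivization.mk K (l₀ • u + m₀ • v) h = P.1)
    (hQ : ∃ h, Projectivization.mk K (l₁ • u + m₁ • v) h = Q.1)
    (h : lineRestrict F u v = (C m₀ * X 0 - C l₀ * X 1) * (C m₁ * X 0 - C l₁ * X 1) *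
      (C e * X 0 + C f * X 1)) :
    ∃ R, TripleRel F P Q R := by
  obtain ⟨hP₀, hP⟩ := hP
  obtain ⟨hQ₀, hQ⟩ := hQ
  by_cases h₀ : lineRestrict F u v = 0
  · have hmem (s t : K) : s • u + t • v ∈ Submodule.span K {u, v} :=
      Submodule.mem_span_pair.2 ⟨s, t, rfl⟩
    refine ⟨P, _, isLine_span_pair huv, .inr ⟨lineOnSurf_span_pair h₀, ?_, ?_, ?_⟩⟩
    · exact hP ▸ (onLine_mk hP₀).2 (hmem _ _)
    · exact hQ ▸ (onLine_mk hQ₀).2 (hmem _ _)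
    · exact hP ▸ (onLine_mk hP₀).2 (hmem _ _)
  have hef : -f ≠ 0 ∨ e ≠ 0 := by
    by_contra! hef
    refine h₀ ?_
    rw [h, neg_eq_zero.1 hef.1, hef.2]
    simp
  have hR₀ : -f • u + e • v ≠ 0 := smul_add_smul_ne_zero huv hef
  have hR : eval (-f • u + e • v) F = 0 := by
    have := eval_lineRestrict F u v ![-f, e]
    simp only [h, map_mul, map_sub, map_add, eval_C, eval_X, Matrix.cons_val_zero,
      Matrix.cons_val_one] at this
    rw [← this]
    ring
  refine ⟨⟨_, mk_mem_zeroSet hF hR₀ hR⟩, tripleRel_of_meetsAlong huv h₀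
    ⟨1, ![l₀, l₁, -f], ![m₀, m₁, e], Fin.forall_fin_succ.2 ⟨hP₀, Fin.forall_fin_two.2 ⟨hQ₀, hR₀⟩⟩,
      one_ne_zero, ?_, hP, hQ, rfl⟩⟩
  simp [h, Fin.prod_univ_succ]
  ring

lemma exists_tripleRel (hF : F.IsHomogeneous 3) (hn : 3 ≤ n) (P Q : zeroSet F) :
    ∃ R, TripleRel F P Q R := by
  have hP : eval P.1.rep F = 0 := P.2
  have hPmk (v : Fin n → K) :
      ∃ h, Projectivization.mk K ((1 : K) • P.1.rep + (0 : K) • v) h = P.1 := by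
    simp [P.1.rep_nonzero]
  rcases eq_or_ne P Q with rfl | hPQ
  · obtain ⟨v, huv, hv⟩ := exists_tangent_direction F hn P.1.rep_nonzero
    obtain ⟨c, hc⟩ := lineRestrict_eq_of_eval_eq_zero hF hP v
    refine exists_tripleRel_of_lineRestrict_eq hF huv (e := c) (f := eval v F) (hPmk v) (hPmk v) ?_
    rw [hc, hv]
    simp only [map_zero, map_one]
    ring
  · have huv : LinearIndependent K ![P.1.rep, Q.1.rep] :=
      Projectivization.linearIndependent_pair_iff_ne.2 (Subtype.coe_injective.ne hPQ)
    obtain ⟨c, hc⟩ := lineRestrict_eq_of_eval_eq_zero hF hP Q.1.rep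
    have hQmk : ∃ h, Projectivization.mk K ((0 : K) • P.1.rep + (1 : K) • Q.1.rep) h = Q.1 := by
      simp [Q.1.rep_nonzero]
    have hQ : eval Q.1.rep F = 0 := Q.2
    rw [hQ] at hc
    refine exists_tripleRel_of_lineRestrict_eq hF huv
      (e := -∑ i, eval P.1.rep (pderiv i F) * Q.1.rep i) (f := -c) (hPmk _) hQmk ?_
    rw [hc]
    simp only [map_zero, map_one, map_neg]
    ring

end ResidualPoint

/-! ### Arithmetic of point classes -/

section PointClasses

variable {K : Type*} [Field K] {n : ℕ} {F : MvPolynomial (Fin n) K}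

lemma HClass_add_HClass_eq {A B S Q R : zeroSet F} (h₁ : TripleRel F A B S)
    (h₂ : TripleRel F S Q R) : HClass F A + HClass F B = HClass F Q + HClass F R := by
  have hmem {P Q R : zeroSet F} (h : TripleRel F P Q R) :
      FreeAbelianGroup.of P + FreeAbelianGroup.of Q + FreeAbelianGroup.of R ∈ Gp F :=
    AddSubgroup.subset_closure ⟨P, Q, R, h, rfl⟩
  simp only [HClass, ← map_add]
  rw [← sub_eq_zero, ← map_sub, QuotientAddGroup.mk'_apply, QuotientAddGroup.eq_zero_iff]
  refine ⟨?_, by simp [degHom]⟩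
  convert! sub_mem (hmem h₁) (hmem h₂) using 1
  abel

lemma exists_HClass_add_HClass_eq (hF : F.IsHomogeneous 3) (hn : 3 ≤ n) (A B Q : zeroSet F) :
    ∃ R, HClass F A + HClass F B = HClass F Q + HClass F R := by
  obtain ⟨S, hS⟩ := exists_tripleRel hF hn A B
  obtain ⟨R, hR⟩ := exists_tripleRel hF hn S Q
  exact ⟨R, HClass_add_HClass_eq hS hR⟩

lemma exists_mk_eq_HClass_add_smul (hF : F.IsHomogeneous 3) (hn : 3 ≤ n) (O : zeroSet F)
    (g : GS F) : ∃ P : zeroSet F,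
      QuotientAddGroup.mk' (Gpp F) g = HClass F P + (degHom F g - 1) • HClass F O := by
  induction g using FreeAbelianGroup.induction_on with
  | zero => exact ⟨O, by simp⟩
  | of P => exact ⟨P, by simp [HClass, degHom]⟩
  | neg P _ =>
    obtain ⟨R, hR⟩ := exists_HClass_add_HClass_eq hF hn O O P
    have hdeg : degHom F (-FreeAbelianGroup.of P) - 1 = -2 := by simp [degHom]
    refine ⟨R, ?_⟩
    rw [hdeg, map_neg, ← HClass, neg_smul, two_smul, hR]
    abel
  | add g₁ g₂ h₁ h₂ =>
    obtain ⟨P₁, h₁⟩ := h₁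
    obtain ⟨P₂, h₂⟩ := h₂
    obtain ⟨R, hR⟩ := exists_HClass_add_HClass_eq hF hn P₁ P₂ O
    refine ⟨R, ?_⟩
    rw [map_add, map_add, h₁, h₂, eq_sub_of_add_eq hR]
    module

lemma exists_eq_H0diff (hF : F.IsHomogeneous 3) (hn : 3 ≤ n) (O : zeroSet F) (x : H0 F) :
    ∃ P, x = H0diff F P O := by
  obtain ⟨x, hx⟩ := x
  obtain ⟨g, rfl⟩ := QuotientAddGroup.mk'_surjective _ x
  have hg : degHom F g = 0 := hx
  obtain ⟨P, hP⟩ := exists_mk_eq_HClass_add_smul hF hn O g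
  refine ⟨P, Subtype.ext ?_⟩
  simp [H0diff, hP, hg, sub_eq_add_neg]

end PointClasses

/-! ### Collinear points on a Weierstrass curve -/

section Affine

variable {K : Type*} [Field K] {W : WeierstrassCurve.Affine K} {x₁ x₂ x₃ y₁ y₂ y₃ ℓ : K}

lemma vieta_of_addPolynomial_eq (h : W.addPolynomial x₁ y₁ ℓ =
      -((.X - .C x₁) * (.X - .C x₂) * (.X - .C x₃))) :
    -ℓ ^ 2 - W.a₁ * ℓ + W.a₂ = -(x₁ + x₂ + x₃) ∧
      2 * x₁ * ℓ ^ 2 + (W.a₁ * x₁ - 2 * y₁ - W.a₃) * ℓ + (-W.a₁ * y₁ + W.a₄) =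
        x₁ * x₂ + x₁ * x₃ + x₂ * x₃ := by
  rw [WeierstrassCurve.Affine.addPolynomial_eq, Cubic.prod_X_sub_C_eq, neg_inj] at h
  have h := (Cubic.toPoly_injective _ _).1 h
  simp only [Cubic.mk.injEq] at h
  exact ⟨h.2.1, h.2.2.1⟩

lemma slope_eq_of_addPolynomial_eq [DecidableEq K] (h₁ : W.Nonsingular x₁ y₁)
    (hy₂ : y₂ = ℓ * (x₂ - x₁) + y₁) (h : W.addPolynomial x₁ y₁ ℓ =
      -((.X - .C x₁) * (.X - .C x₂) * (.X - .C x₃))) :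
    ¬(x₁ = x₂ ∧ y₁ = W.negY x₂ y₂) ∧ W.slope x₁ x₂ y₁ y₂ = ℓ := by
  obtain ⟨hsum, hmul⟩ := vieta_of_addPolynomial_eq h
  subst hy₂
  by_cases hx : x₁ = x₂
  · subst hx
    have hy₂ : ℓ * (x₁ - x₁) + y₁ = y₁ := by ring
    have htangent : ℓ * (y₁ - W.negY x₁ y₁) =
        3 * x₁ ^ 2 + 2 * W.a₂ * x₁ + W.a₄ - W.a₁ * y₁ := by
      rw [WeierstrassCurve.Affine.negY]
      linear_combination -hmul - 2 * x₁ * hsum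
    have hY : y₁ ≠ W.negY x₁ y₁ := fun hY ↦ by
      rw [sub_eq_zero.2 hY, mul_zero] at htangent
      rcases ((WeierstrassCurve.Affine.nonsingular_iff ..).1 h₁).2 with hX | hY'
      · exact hX (by linear_combination htangent)
      · exact hY' hY
    rw [hy₂, WeierstrassCurve.Affine.slope_of_Y_ne rfl hY, ← htangent,
      mul_div_cancel_right₀ _ (sub_ne_zero.2 hY)]
    exact ⟨fun h ↦ hY h.2, rfl⟩
  · rw [WeierstrassCurve.Affine.slope_of_X_ne hx, div_eq_iff (sub_ne_zero.2 hx)]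
    exact ⟨fun h ↦ hx h.1, by ring⟩

lemma add_add_eq_zero_of_addPolynomial_eq [DecidableEq K] (h₁ : W.Nonsingular x₁ y₁)
    (h₂ : W.Nonsingular x₂ y₂) (h₃ : W.Nonsingular x₃ y₃) (hy₂ : y₂ = ℓ * (x₂ - x₁) + y₁)
    (hy₃ : y₃ = ℓ * (x₃ - x₁) + y₁)
    (h : W.addPolynomial x₁ y₁ ℓ = -((.X - .C x₁) * (.X - .C x₂) * (.X - .C x₃))) :
    (.some _ _ h₁ + .some _ _ h₂ + .some _ _ h₃ : W.Point) = 0 := by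
  obtain ⟨hxy, hslope⟩ := slope_eq_of_addPolynomial_eq h₁ hy₂ h
  have haddX : W.addX x₁ x₂ ℓ = x₃ := by
    rw [WeierstrassCurve.Affine.addX]
    linear_combination -(vieta_of_addPolynomial_eq h).1
  rw [WeierstrassCurve.Affine.Point.add_some hxy]
  refine WeierstrassCurve.Affine.Point.add_of_Y_eq ?_ ?_
  · rw [hslope, haddX]
  · rw [hslope, WeierstrassCurve.Affine.addY, WeierstrassCurve.Affine.negAddY, haddX, hy₃]

end Affine

section Projective

variable {K : Type*} [Field K] {W : WeierstrassCurve K}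

open WeierstrassCurve.Projective.Point (toAffine)

lemma isHomogeneous_polynomial (W : WeierstrassCurve K) :
    W.toProjective.polynomial.IsHomogeneous 3 := by
  have h (i j k : Fin 3) : (X i * X j * X k : MvPolynomial (Fin 3) K).IsHomogeneous 3 :=
    ((isHomogeneous_X _ i).mul (isHomogeneous_X _ j)).mul (isHomogeneous_X _ k)
  have heq : W.toProjective.polynomial =
      X 1 * X 1 * X 2 + C W.a₁ * (X 0 * X 1 * X 2) + C W.a₃ * (X 1 * X 2 * X 2) -
        (X 0 * X 0 * X 0 + C W.a₂ * (X 0 * X 0 * X 2) + C W.a₄ * (X 0 * X 2 * X 2) +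
          C W.a₆ * (X 2 * X 2 * X 2)) := by
    rw [WeierstrassCurve.Projective.polynomial]
    ring
  rw [heq]
  exact (((h 1 1 2).add ((h 0 1 2).C_mul _)).add ((h 1 2 2).C_mul _)).sub
    ((((h 0 0 0).add ((h 0 0 2).C_mul _)).add ((h 0 2 2).C_mul _)).add ((h 2 2 2).C_mul _))

lemma aeval_X_one_lineRestrict_polynomial (ℓ ν x : K) :
    aeval ![Polynomial.X, 1] (lineRestrict W.toProjective.polynomial ![1, ℓ, 0] ![0, ν, 1]) =
      W.toAffine.addPolynomial x (ℓ * x + ν) ℓ := by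
  simp [lineRestrict, WeierstrassCurve.Projective.polynomial,
    WeierstrassCurve.Affine.addPolynomial, WeierstrassCurve.Affine.linePolynomial,
    WeierstrassCurve.Affine.polynomial]
  ring

lemma toAffine_eq_some {w : Fin 3 → K} (hw : W.toProjective.Nonsingular w) {x y z : K}
    (hz : z ≠ 0) (h : w = z • ![x, y, 1]) :
    ∃ hxy : W.toAffine.Nonsingular x y, toAffine W w = .some x y hxy := by
  rw [h, WeierstrassCurve.Projective.nonsingular_smul _ hz.isUnit] at hw
  exact ⟨_, by rw [h, WeierstrassCurve.Projective.Point.toAffine_smul _ hz.isUnit,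
    WeierstrassCurve.Projective.Point.toAffine_some hw]⟩

lemma lineRestrict_polynomial_vertical (x : K) :
    lineRestrict W.toProjective.polynomial ![x, 0, 1] ![0, 1, 0] =
      C (-(x ^ 3 + W.a₂ * x ^ 2 + W.a₄ * x + W.a₆)) * X 0 ^ 3 +
        C (W.a₁ * x + W.a₃) * X 0 ^ 2 * X 1 + C 1 * X 0 * X 1 ^ 2 + C 0 * X 1 ^ 3 := by
  simp [lineRestrict, WeierstrassCurve.Projective.polynomial]
  ring

lemma eval_polynomial_of_Z_eq_zero (x y : K) :
    eval ![x, y, 0] W.toProjective.polynomial = -x ^ 3 := by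
  simp [WeierstrassCurve.Projective.eval_polynomial]

lemma sum_toAffine_eq_zero_of_nonvertical [DecidableEq K] {ℓ ν c : K} {l m : Fin 3 → K}
    (hns : ∀ k, W.toProjective.Nonsingular (l k • ![1, ℓ, 0] + m k • ![0, ν, 1]))
    (h : lineRestrict W.toProjective.polynomial ![1, ℓ, 0] ![0, ν, 1] =
      C c * ∏ k, (C (m k) * X 0 - C (l k) * X 1)) :
    ∑ k, toAffine W (l k • ![1, ℓ, 0] + m k • ![0, ν, 1]) = 0 := by
  have hlead : c * m 0 * m 1 * m 2 = -1 := by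
    have := congrArg (eval ![1, 0]) h
    have hu : (1 : K) • ![1, ℓ, 0] + (0 : K) • ![0, ν, 1] = ![1, ℓ, 0] := by simp
    simp only [eval_lineRestrict, Matrix.cons_val_zero, Matrix.cons_val_one, hu,
      eval_polynomial_of_Z_eq_zero, map_mul, map_sub, eval_C, eval_X, Fin.prod_univ_three] at this
    linear_combination -this
  have hm (k : Fin 3) : m k ≠ 0 := fun hk ↦ by
    fin_cases k <;> simp_all
  have hpoly : W.toAffine.addPolynomial (l 0 / m 0) (ℓ * (l 0 / m 0) + ν) ℓ =
      -((.X - .C (l 0 / m 0)) * (.X - .C (l 1 / m 1)) * (.X - .C (l 2 / m 2))) := by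
    have hl (k : Fin 3) : Polynomial.C (l k) = .C (m k) * .C (l k / m k) := by
      rw [← Polynomial.C_mul, mul_div_cancel₀ _ (hm k)]
    have hlead := congrArg Polynomial.C hlead
    simp only [Polynomial.C_mul, Polynomial.C_neg, Polynomial.C_1] at hlead
    rw [← aeval_X_one_lineRestrict_polynomial, h]
    simp only [map_mul, map_sub, algHom_C, aeval_X, Fin.prod_univ_three,
      Polynomial.algebraMap_eq, Matrix.cons_val_zero, Matrix.cons_val_one, hl]
    linear_combination (.X - .C (l 0 / m 0)) * (.X - .C (l 1 / m 1)) * (.X - .C (l 2 / m 2)) *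
      hlead
  have hpt (k : Fin 3) : l k • ![1, ℓ, 0] + m k • ![0, ν, 1] =
      m k • ![l k / m k, ℓ * (l k / m k) + ν, 1] := by
    have := hm k
    ext i
    fin_cases i <;> simp <;> field_simp
  choose hxy heq using fun k ↦ toAffine_eq_some (hns k) (hm k) (hpt k)
  rw [Fin.sum_univ_three, heq, heq, heq]
  exact add_add_eq_zero_of_addPolynomial_eq _ _ _ (by ring) (by ring) hpoly

lemma sum_toAffine_eq_zero_of_vertical_of_eq_zero [DecidableEq K] {x c : K} {l m : Fin 3 → K}
    (hns : ∀ k, W.toProjective.Nonsingular (l k • ![x, 0, 1] + m k • ![0, 1, 0]))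
    (h : lineRestrict W.toProjective.polynomial ![x, 0, 1] ![0, 1, 0] =
      C c * ∏ k, (C (m k) * X 0 - C (l k) * X 1)) (hl : l 0 = 0) :
    ∑ k, toAffine W (l k • ![x, 0, 1] + m k • ![0, 1, 0]) = 0 := by
  rw [lineRestrict_polynomial_vertical] at h
  obtain ⟨-, hb, hc, -⟩ := coeff_eq_of_binary_cubic_eq h
  have hlead : c * m 0 * l 1 * l 2 = 1 := by
    rw [hc, hl]
    ring
  have hmid : c * m 0 * (l 1 * m 2 + m 1 * l 2) = -(W.a₁ * x + W.a₃) := by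
    rw [hb, hl]
    ring
  have hl₁ : l 1 ≠ 0 := fun h₁ ↦ by simp [h₁] at hlead
  have hl₂ : l 2 ≠ 0 := fun h₂ ↦ by simp [h₂] at hlead
  have hpt (k : Fin 3) (hk : l k ≠ 0) : l k • ![x, 0, 1] + m k • ![0, 1, 0] =
      l k • ![x, m k / l k, 1] := by
    ext i
    fin_cases i <;> simp [mul_div_cancel₀ _ hk]
  have hzero : toAffine W (l 0 • ![x, 0, 1] + m 0 • ![0, 1, 0]) = 0 :=
    WeierstrassCurve.Projective.Point.toAffine_of_Z_eq_zero (by simp [hl])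
  obtain ⟨_, heq₁⟩ := toAffine_eq_some (hns 1) hl₁ (hpt 1 hl₁)
  obtain ⟨_, heq₂⟩ := toAffine_eq_some (hns 2) hl₂ (hpt 2 hl₂)
  rw [Fin.sum_univ_three, hzero, heq₁, heq₂, zero_add]
  refine WeierstrassCurve.Affine.Point.add_of_Y_eq rfl ?_
  rw [WeierstrassCurve.Affine.negY]
  field_simp
  linear_combination l 1 * l 2 * hmid - (l 1 * m 2 + m 1 * l 2) * hlead

lemma sum_toAffine_eq_zero_of_vertical [DecidableEq K] {x c : K} {l m : Fin 3 → K}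
    (hns : ∀ k, W.toProjective.Nonsingular (l k • ![x, 0, 1] + m k • ![0, 1, 0])) (hc : c ≠ 0)
    (h : lineRestrict W.toProjective.polynomial ![x, 0, 1] ![0, 1, 0] =
      C c * ∏ k, (C (m k) * X 0 - C (l k) * X 1)) :
    ∑ k, toAffine W (l k • ![x, 0, 1] + m k • ![0, 1, 0]) = 0 := by
  obtain ⟨j, hj⟩ : ∃ j, l j = 0 := by
    rw [lineRestrict_polynomial_vertical] at h
    have hd := (coeff_eq_of_binary_cubic_eq h).2.2.2
    rw [eq_comm, neg_eq_zero, mul_eq_zero_iff_left hc, mul_eq_zero, mul_eq_zero] at hd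
    rcases hd with (h | h) | h
    exacts [⟨0, h⟩, ⟨1, h⟩, ⟨2, h⟩]
  rw [← Equiv.sum_comp (Equiv.swap 0 j)]
  refine sum_toAffine_eq_zero_of_vertical_of_eq_zero (c := c) (fun k ↦ hns _) ?_ ?_
  · rw [h, ← Equiv.prod_comp (Equiv.swap 0 j)]
  · simpa

lemma IsLine.exists_normal_vector {L : Submodule K (Fin 3 → K)} (hL : IsLine L) :
    ∃ a : Fin 3 → K, ∀ w, w ∈ L ↔ a 0 * w 0 + a 1 * w 1 + a 2 * w 2 = 0 := by
  have hlt : L < ⊤ := lt_top_iff_ne_top.2 fun h ↦ by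
    rw [IsLine, h, finrank_top, Module.finrank_fin_fun] at hL
    omega
  obtain ⟨φ, hφ, hle⟩ := L.exists_le_ker_of_lt_top hlt
  have hker : L = LinearMap.ker φ := by
    refine Submodule.eq_of_le_of_finrank_le hle ?_
    have := Module.Dual.finrank_ker_add_one_of_ne_zero hφ
    rw [Module.finrank_fin_fun] at this
    rw [hL]
    omega
  have hφ' (w : Fin 3 → K) : φ w = ∑ i, w i * φ fun j ↦ if i = j then 1 else 0 :=
    LinearMap.pi_apply_eq_sum_univ φ w
  refine ⟨fun i ↦ φ fun j ↦ if i = j then 1 else 0, fun w ↦ ?_⟩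
  rw [hker, LinearMap.mem_ker, hφ', Fin.sum_univ_three]
  simp only [mul_comm]

lemma IsLine.exists_normal_basis {L : Submodule K (Fin 3 → K)} (hL : IsLine L) :
    ∃ u ∈ L, ∃ v ∈ L, LinearIndependent K ![u, v] ∧
      ((∃ ℓ ν, u = ![1, ℓ, 0] ∧ v = ![0, ν, 1]) ∨ (∃ x, u = ![x, 0, 1] ∧ v = ![0, 1, 0]) ∨
        u = ![1, 0, 0] ∧ v = ![0, 1, 0]) := by
  obtain ⟨a, hmem⟩ := hL.exists_normal_vector
  simp only [hmem, LinearIndependent.pair_iff]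
  by_cases h₁ : a 1 = 0
  · by_cases h₀ : a 0 = 0
    · exact ⟨![1, 0, 0], by simp [h₀], ![0, 1, 0], by simp [h₁], fun s t h ↦ by simpa using h,
        .inr (.inr ⟨rfl, rfl⟩)⟩
    · refine ⟨![-a 2 / a 0, 0, 1], ?_, ![0, 1, 0], by simp [h₁], fun s t h ↦ ?_,
        .inr (.inl ⟨_, rfl, rfl⟩)⟩
      · simp [mul_div_cancel₀ _ h₀]
      · obtain ⟨-, ht, hs⟩ : _ ∧ t = 0 ∧ s = 0 := by simpa using h
        exact ⟨hs, ht⟩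
  · refine ⟨![1, -a 0 / a 1, 0], ?_, ![0, -a 2 / a 1, 1], ?_, fun s t h ↦ ?_,
      .inl ⟨_, _, rfl, rfl⟩⟩
    · simp [mul_div_cancel₀ _ h₁]
    · simp [mul_div_cancel₀ _ h₁]
    · obtain ⟨hs, -, ht⟩ : s = 0 ∧ _ ∧ t = 0 := by simpa using h
      exact ⟨hs, ht⟩

end Projective

section WeierstrassPoints

variable {K : Type*} [Field K] {W : WeierstrassCurve K}

open WeierstrassCurve.Projective.Point (toAffine)

lemma not_lineOnSurf_polynomial {L : Submodule K (Fin 3 → K)} (hL : IsLine L) :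
    ¬LineOnSurf W.toProjective.polynomial L := by
  intro h
  have hne {a : K} {w : Fin 3 → K} (hw : w ∈ L) (hw' : w = ![1, a, 0]) : False := by
    have := eval_lineRestrict W.toProjective.polynomial w w ![1, 0]
    rw [h w w hw hw, hw'] at this
    simp [eval_polynomial_of_Z_eq_zero] at this
  obtain ⟨u, hu, v, hv, -, ⟨ℓ, ν, hu_eq, -⟩ | ⟨x, rfl, rfl⟩ | ⟨hu_eq, -⟩⟩ :=
    hL.exists_normal_basis
  · exact hne hu hu_eq
  · have hzero := h _ _ hu hv
    rw [lineRestrict_polynomial_vertical] at hzero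
    have := coeff_eq_of_binary_cubic_eq (e := 0) (l := 0) (m := 0)
      (hzero.trans (by rw [C_0, zero_mul]))
    simp at this
  · exact hne hu hu_eq

/-- The point of the Weierstrass curve `W`, in the affine model used by Mathlib for the group law,
that corresponds to a point of the projective plane cubic defined by `W`. -/
def weierstrassPoint (W : WeierstrassCurve K) (P : zeroSet W.toProjective.polynomial) :
    W.toAffine.Point :=
  toAffine W P.1.rep

lemma toAffine_eq_weierstrassPoint {w : Fin 3 → K} {hw : w ≠ 0}
    {P : zeroSet W.toProjective.polynomial} (h : Projectivization.mk K w hw = P.1) :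
    toAffine W w = weierstrassPoint W P := by
  obtain ⟨a, ha⟩ := Projectivization.exists_smul_eq_mk_rep K w hw
  rw [weierstrassPoint, ← h, ← ha, Units.smul_def,
    WeierstrassCurve.Projective.Point.toAffine_smul _ a.isUnit]

lemma nonsingular_of_mem_zeroSet [W.IsElliptic] (P : zeroSet W.toProjective.polynomial) :
    W.toProjective.Nonsingular P.1.rep := by
  have hP : W.toProjective.Equation P.1.rep := P.2
  by_cases hz : P.1.rep 2 = 0
  · have hx : P.1.rep 0 = 0 := WeierstrassCurve.Projective.X_eq_zero_of_Z_eq_zero hP hz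
    have hy : P.1.rep 1 ≠ 0 := fun hy ↦ P.1.rep_nonzero <| by
      ext i
      fin_cases i <;> assumption
    rw [WeierstrassCurve.Projective.nonsingular_of_Z_eq_zero hz]
    simp [hP, hx, hy]
  · rw [WeierstrassCurve.Projective.nonsingular_of_Z_ne_zero hz,
      ← WeierstrassCurve.Affine.equation_iff_nonsingular]
    exact (WeierstrassCurve.Projective.equation_of_Z_ne_zero hz).1 hP

lemma nonsingular_of_mk_eq [W.IsElliptic] {w : Fin 3 → K} {hw : w ≠ 0}
    {P : zeroSet W.toProjective.polynomial} (h : Projectivization.mk K w hw = P.1) :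
    W.toProjective.Nonsingular w := by
  obtain ⟨a, ha⟩ := Projectivization.exists_smul_eq_mk_rep K w hw
  have := nonsingular_of_mem_zeroSet P
  rwa [← h, ← ha, Units.smul_def, WeierstrassCurve.Projective.nonsingular_smul _ a.isUnit] at this

lemma weierstrassPoint_add_add_eq_zero [DecidableEq K] [W.IsElliptic]
    {P Q R : zeroSet W.toProjective.polynomial} (h : TripleRel _ P Q R) :
    weierstrassPoint W P + weierstrassPoint W Q + weierstrassPoint W R = 0 := by
  obtain ⟨L, hL, ⟨-, hPQR⟩ | ⟨hon, -⟩⟩ := h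
  swap
  · exact (not_lineOnSurf_polynomial hL hon).elim
  obtain ⟨u, hu, v, hv, huv, huv'⟩ := hL.exists_normal_basis
  obtain ⟨c, l, m, hne, hc, hfac, hP, hQ, hR⟩ := hPQR.meetsAlong hL hu hv huv
  have hns : ∀ k, W.toProjective.Nonsingular (l k • u + m k • v) :=
    Fin.forall_fin_succ.2 ⟨nonsingular_of_mk_eq hP,
      Fin.forall_fin_two.2 ⟨nonsingular_of_mk_eq hQ, nonsingular_of_mk_eq hR⟩⟩
  suffices ∑ k, toAffine W (l k • u + m k • v) = 0 by
    rwa [Fin.sum_univ_three, toAffine_eq_weierstrassPoint hP, toAffine_eq_weierstrassPoint hQ,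
      toAffine_eq_weierstrassPoint hR] at this
  obtain ⟨ℓ, ν, rfl, rfl⟩ | ⟨x, rfl, rfl⟩ | ⟨rfl, rfl⟩ := huv'
  · exact sum_toAffine_eq_zero_of_nonvertical hns hfac
  · exact sum_toAffine_eq_zero_of_vertical hns hc hfac
  · exact Finset.sum_eq_zero fun k _ ↦
      WeierstrassCurve.Projective.Point.toAffine_of_Z_eq_zero (by simp)

/-- The sum, in the group law of the elliptic curve `W`, of a class of divisors. -/
def sumHom (W : WeierstrassCurve K) [DecidableEq K] [W.IsElliptic] :
    HS W.toProjective.polynomial →+ W.toAffine.Point :=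
  QuotientAddGroup.lift _ (FreeAbelianGroup.lift (weierstrassPoint W)) <| by
    suffices Gp _ ≤ (FreeAbelianGroup.lift (weierstrassPoint W)).ker from inf_le_left.trans this
    rw [Gp, AddSubgroup.closure_le]
    rintro _ ⟨P, Q, R, h, rfl⟩
    simpa using weierstrassPoint_add_add_eq_zero h

@[simp]
lemma sumHom_HClass [DecidableEq K] [W.IsElliptic] (P : zeroSet W.toProjective.polynomial) :
    sumHom W (HClass _ P) = weierstrassPoint W P :=
  FreeAbelianGroup.lift_apply_of _ _

/-- The point `(0 : 1 : 0)` at infinity of a Weierstrass curve. -/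
def infinityPt (W : WeierstrassCurve K) : zeroSet W.toProjective.polynomial :=
  ⟨Projectivization.mk K ![0, 1, 0] (by simp),
    mk_mem_zeroSet (isHomogeneous_polynomial W) _ WeierstrassCurve.Projective.equation_zero⟩

lemma weierstrassPoint_infinityPt : weierstrassPoint W (infinityPt W) = 0 := by
  rw [← toAffine_eq_weierstrassPoint (P := infinityPt W) rfl,
    WeierstrassCurve.Projective.Point.toAffine_zero]

lemma weierstrassPoint_surjective : Function.Surjective (weierstrassPoint W) := by
  rintro (_ | @⟨x, y, h⟩)
  · exact ⟨infinityPt W, weierstrassPoint_infinityPt⟩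
  · have hw : (![x, y, 1] : Fin 3 → K) ≠ 0 := by simp
    have hns := (WeierstrassCurve.Projective.nonsingular_some (W' := W) x y).2 h
    refine ⟨⟨_, mk_mem_zeroSet (isHomogeneous_polynomial W) hw hns.1⟩, ?_⟩
    rw [← toAffine_eq_weierstrassPoint rfl, WeierstrassCurve.Projective.Point.toAffine_some hns]

lemma eq_infinityPt_of_weierstrassPoint_eq_zero [W.IsElliptic]
    {P : zeroSet W.toProjective.polynomial} (h : weierstrassPoint W P = 0) :
    P = infinityPt W := by
  have hns := nonsingular_of_mem_zeroSet P
  have hz : P.1.rep 2 = 0 := by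
    by_contra hz
    rw [weierstrassPoint, WeierstrassCurve.Projective.Point.toAffine_of_Z_ne_zero hns hz] at h
    exact WeierstrassCurve.Affine.Point.some_ne_zero _ h
  obtain ⟨a, ha⟩ := WeierstrassCurve.Projective.equiv_zero_of_Z_eq_zero hns hz
  refine Subtype.ext ?_
  rw [← P.1.mk_rep, infinityPt]
  exact (Projectivization.mk_eq_mk_iff K _ _ P.1.rep_nonzero _).2 ⟨a, ha⟩

/-- The degree zero classes on an elliptic curve in Weierstrass form are its group of points. -/
def H0EquivPoint (W : WeierstrassCurve K) [DecidableEq K] [W.IsElliptic] :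
    H0 W.toProjective.polynomial ≃+ W.toAffine.Point :=
  AddEquiv.ofBijective ((sumHom W).comp (AddSubgroup.subtype _)) <| by
    have hdiff (P : zeroSet W.toProjective.polynomial) :
        (sumHom W).comp (H0 _).subtype (H0diff _ P (infinityPt W)) = weierstrassPoint W P := by
      simp [H0diff, weierstrassPoint_infinityPt]
    constructor
    · refine (injective_iff_map_eq_zero _).2 fun x hx ↦ ?_
      obtain ⟨P, rfl⟩ :=
        exists_eq_H0diff (isHomogeneous_polynomial W) le_rfl (infinityPt W) x
      rw [eq_infinityPt_of_weierstrassPoint_eq_zero ((hdiff P).symm.trans hx)]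
      exact Subtype.ext (sub_self _)
    · intro p
      obtain ⟨P, rfl⟩ := weierstrassPoint_surjective p
      exact ⟨_, hdiff P⟩

end WeierstrassPoints

/-! ### Changes of coordinates -/

section Collineation

variable {K : Type*} [Field K] {n : ℕ} {F G : MvPolynomial (Fin n) K}

lemma map_Gp_equivOfEquiv (e : zeroSet F ≃ zeroSet G)
    (he : ∀ P Q R, TripleRel F P Q R ↔ TripleRel G (e P) (e Q) (e R)) :
    (Gp F).map (FreeAbelianGroup.equivOfEquiv e : GS F →+ GS G) = Gp G := by
  rw [Gp, AddMonoidHom.map_closure, Gp]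
  congr 1
  ext x
  constructor
  · rintro ⟨_, ⟨P, Q, R, h, rfl⟩, rfl⟩
    exact ⟨e P, e Q, e R, (he P Q R).1 h, by simp [FreeAbelianGroup.equivOfEquiv]⟩
  · rintro ⟨P, Q, R, h, rfl⟩
    refine ⟨_, ⟨e.symm P, e.symm Q, e.symm R, (he _ _ _).2 ?_, rfl⟩, ?_⟩
    · simpa using h
    · simp [FreeAbelianGroup.equivOfEquiv]

lemma degHom_comp_equivOfEquiv (e : zeroSet F ≃ zeroSet G) :
    (degHom G).comp (FreeAbelianGroup.equivOfEquiv e : GS F →+ GS G) = degHom F := by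
  ext P
  simp [degHom, FreeAbelianGroup.equivOfEquiv]

lemma map_ker_of_comp_eq {A B D : Type*} [AddCommGroup A] [AddCommGroup B] [AddCommGroup D]
    (e : A ≃+ B) {f : A →+ D} {g : B →+ D} (h : g.comp (e : A →+ B) = f) :
    f.ker.map (e : A →+ B) = g.ker := by
  rw [← h, ← AddMonoidHom.comap_ker]
  exact AddSubgroup.map_comap_eq_self_of_surjective e.surjective _

lemma map_Gpp_equivOfEquiv (e : zeroSet F ≃ zeroSet G)
    (he : ∀ P Q R, TripleRel F P Q R ↔ TripleRel G (e P) (e Q) (e R)) :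
    (Gpp F).map (FreeAbelianGroup.equivOfEquiv e : GS F →+ GS G) = Gpp G :=
  (AddSubgroup.map_inf _ _ _ (FreeAbelianGroup.equivOfEquiv e).injective).trans <|
    congrArg₂ _ (map_Gp_equivOfEquiv e he) (map_ker_of_comp_eq _ (degHom_comp_equivOfEquiv e))

/-- The isomorphism of class groups induced by a bijection of points that preserves and reflects
collinearity. -/
def HSCongr (e : zeroSet F ≃ zeroSet G)
    (he : ∀ P Q R, TripleRel F P Q R ↔ TripleRel G (e P) (e Q) (e R)) : HS F ≃+ HS G :=
  QuotientAddGroup.congr _ _ (FreeAbelianGroup.equivOfEquiv e) (map_Gpp_equivOfEquiv e he)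

lemma map_H0_HSCongr (e : zeroSet F ≃ zeroSet G)
    (he : ∀ P Q R, TripleRel F P Q R ↔ TripleRel G (e P) (e Q) (e R)) :
    (H0 F).map (HSCongr e he : HS F →+ HS G) = H0 G :=
  map_ker_of_comp_eq _ <| QuotientAddGroup.addMonoidHom_ext _ (degHom_comp_equivOfEquiv e)

/-- The restriction of `HSCongr` to classes of degree zero. -/
def H0Congr (e : zeroSet F ≃ zeroSet G)
    (he : ∀ P Q R, TripleRel F P Q R ↔ TripleRel G (e P) (e Q) (e R)) : H0 F ≃+ H0 G :=
  ((HSCongr e he).addSubgroupMap (H0 F)).trans (AddEquiv.addSubgroupCongr (map_H0_HSCongr e he))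

end Collineation

section CoordChange

variable {K : Type*} [Field K] {n : ℕ} {F G : MvPolynomial (Fin n) K}
  {T : (Fin n → K) ≃ₗ[K] (Fin n → K)}

/-- The linear change of coordinates `T` carries the form `F` to a scalar multiple of `G`. This is
expressed through restrictions to lines, the only way in which forms enter `TripleRel`. -/
def IsCoordChange (T : (Fin n → K) ≃ₗ[K] (Fin n → K)) (F G : MvPolynomial (Fin n) K) : Prop :=
  ∃ c : K, c ≠ 0 ∧ ∀ u v, lineRestrict G (T u) (T v) = C c * lineRestrict F u v

lemma IsCoordChange.symm (h : IsCoordChange T F G) : IsCoordChange T.symm G F := by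
  obtain ⟨c, hc, h⟩ := h
  refine ⟨c⁻¹, inv_ne_zero hc, fun u v ↦ ?_⟩
  have := h (T.symm u) (T.symm v)
  rw [T.apply_symm_apply, T.apply_symm_apply] at this
  rw [this, ← mul_assoc, ← C_mul, inv_mul_cancel₀ hc, C_1, one_mul]

lemma IsCoordChange.eval_eq_zero (h : IsCoordChange T F G) {w : Fin n → K} (hw : eval w F = 0) :
    eval (T w) G = 0 := by
  obtain ⟨c, -, h⟩ := h
  have := congrArg (eval ![1, 0]) (h w w)
  simpa [eval_lineRestrict, hw] using this

lemma IsCoordChange.map_mem_zeroSet (h : IsCoordChange T F G) {d : ℕ} (hG : G.IsHomogeneous d)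
    {P : Projectivization K (Fin n → K)} (hP : P ∈ zeroSet F) :
    P.map T.toLinearMap T.injective ∈ zeroSet G := by
  rw [← P.mk_rep, Projectivization.map_mk]
  exact mk_mem_zeroSet hG _ (h.eval_eq_zero hP)

lemma IsCoordChange.lineOnSurf_map_iff (h : IsCoordChange T F G)
    {W : Submodule K (Fin n → K)} : LineOnSurf G (W.map T.toLinearMap) ↔ LineOnSurf F W := by
  obtain ⟨c, hc, h⟩ := h
  have hC : (C c : MvPolynomial (Fin 2) K) ≠ 0 := C_ne_zero.2 hc
  constructor
  · intro hW u v hu hv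
    have := hW _ _ (Submodule.mem_map_of_mem hu) (Submodule.mem_map_of_mem hv)
    exact (mul_eq_zero_iff_left hC).1 ((h u v).symm.trans this)
  · rintro hW _ _ ⟨u, hu, rfl⟩ ⟨v, hv, rfl⟩
    exact (h u v).trans (by rw [hW u v hu hv, mul_zero])

lemma onLine_map {W : Submodule K (Fin n → K)} {P : Projectivization K (Fin n → K)}
    (hP : OnLine W P) : OnLine (W.map T.toLinearMap) (P.map T.toLinearMap T.injective) := by
  rw [← P.mk_rep, Projectivization.map_mk, onLine_mk]
  exact Submodule.mem_map_of_mem hP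

lemma IsCoordChange.meetsIn (h : IsCoordChange T F G) {W : Submodule K (Fin n → K)}
    {P Q R : Projectivization K (Fin n → K)} (hPQR : MeetsIn F W P Q R) :
    MeetsIn G (W.map T.toLinearMap) (P.map T.toLinearMap T.injective)
      (Q.map T.toLinearMap T.injective) (R.map T.toLinearMap T.injective) := by
  obtain ⟨c, hc, h⟩ := h
  obtain ⟨u, v, hu, hv, huv, c', l, m, hne, hc', hfac, rfl, rfl, rfl⟩ := hPQR
  have hT k : T (l k • u + m k • v) = l k • T u + m k • T v := by simp
  refine ⟨T u, T v, Submodule.mem_map_of_mem hu, Submodule.mem_map_of_mem hv, ?_, c * c', l, m,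
    fun k ↦ hT k ▸ T.map_ne_zero_iff.2 (hne k), mul_ne_zero hc hc', ?_, ?_⟩
  · rw [LinearIndependent.pair_iff] at huv ⊢
    intro s t hst
    refine huv s t (T.map_eq_zero_iff.1 ?_)
    simpa using hst
  · rw [h, hfac, C_mul, mul_assoc]
  · simp [Projectivization.map_mk]

/-- The bijection of points induced by a change of coordinates. -/
def IsCoordChange.zeroSetEquiv (h : IsCoordChange T F G) {d : ℕ} (hF : F.IsHomogeneous d)
    (hG : G.IsHomogeneous d) : zeroSet F ≃ zeroSet G where
  toFun P := ⟨_, h.map_mem_zeroSet hG P.2⟩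
  invFun P := ⟨_, h.symm.map_mem_zeroSet hF P.2⟩
  left_inv P := Subtype.ext <| by
    obtain ⟨⟨w⟩, -⟩ := P
    exact (Projectivization.mk_eq_mk_iff K _ _ _ _).2 ⟨1, by simp⟩
  right_inv P := Subtype.ext <| by
    obtain ⟨⟨w⟩, -⟩ := P
    exact (Projectivization.mk_eq_mk_iff K _ _ _ _).2 ⟨1, by simp⟩

lemma IsCoordChange.tripleRel (h : IsCoordChange T F G) {d : ℕ} (hF : F.IsHomogeneous d)
    (hG : G.IsHomogeneous d) {P Q R : zeroSet F} (hPQR : TripleRel F P Q R) :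
    TripleRel G (h.zeroSetEquiv hF hG P) (h.zeroSetEquiv hF hG Q) (h.zeroSetEquiv hF hG R) := by
  obtain ⟨W, hW, hPQR⟩ := hPQR
  refine ⟨W.map T.toLinearMap, (T.finrank_map_eq W).trans hW, hPQR.imp ?_ ?_⟩
  · exact fun ⟨hon, hm⟩ ↦ ⟨h.lineOnSurf_map_iff.not.2 hon, h.meetsIn hm⟩
  · exact fun ⟨hon, hP, hQ, hR⟩ ↦
      ⟨h.lineOnSurf_map_iff.2 hon, onLine_map hP, onLine_map hQ, onLine_map hR⟩

lemma IsCoordChange.tripleRel_iff (h : IsCoordChange T F G) {d : ℕ} (hF : F.IsHomogeneous d)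
    (hG : G.IsHomogeneous d) (P Q R : zeroSet F) :
    TripleRel F P Q R ↔
      TripleRel G (h.zeroSetEquiv hF hG P) (h.zeroSetEquiv hF hG Q) (h.zeroSetEquiv hF hG R) := by
  refine ⟨h.tripleRel hF hG, fun hPQR ↦ ?_⟩
  have hsymm : h.symm.zeroSetEquiv hG hF = (h.zeroSetEquiv hF hG).symm := rfl
  simpa only [hsymm, Equiv.symm_apply_apply] using h.symm.tripleRel hG hF hPQR

end CoordChange

/-! ### The Fermat cubic -/

section Fermat

variable {K : Type*} [Field K]

/-- The Fermat cubic form `x ^ 3 + y ^ 3 + z ^ 3`. -/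
def fermatCubic (K : Type*) [Field K] : MvPolynomial (Fin 3) K :=
  X 0 ^ 3 + X 1 ^ 3 + X 2 ^ 3

lemma isHomogeneous_fermatCubic : (fermatCubic K).IsHomogeneous 3 :=
  ((isHomogeneous_X_pow 0 3).add (isHomogeneous_X_pow 1 3)).add (isHomogeneous_X_pow 2 3)

/-- The Weierstrass curve `y ^ 2 + y = x ^ 3 - 7`, a model of the Fermat cubic. -/
def fermatWeierstrass (K : Type*) [Field K] : WeierstrassCurve K := ⟨0, 0, 1, 0, -7⟩

lemma fermatWeierstrass_Δ : (fermatWeierstrass K).Δ = -3 ^ 9 := by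
  simp only [fermatWeierstrass, WeierstrassCurve.Δ, WeierstrassCurve.b₂, WeierstrassCurve.b₄,
    WeierstrassCurve.b₆, WeierstrassCurve.b₈]
  norm_num

lemma isElliptic_fermatWeierstrass (h3 : (3 : K) ≠ 0) : (fermatWeierstrass K).IsElliptic :=
  ⟨fermatWeierstrass_Δ (K := K) ▸ (neg_ne_zero.2 (pow_ne_zero 9 h3)).isUnit⟩

/-- The change of coordinates from the Fermat cubic to its Weierstrass model; it sends the flex
`(1 : -1 : 0)` to the point at infinity. -/
def fermatCoordChange (h3 : (3 : K) ≠ 0) : (Fin 3 → K) ≃ₗ[K] (Fin 3 → K) where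
  toFun w := ![-3 * w 2, 4 * w 0 - 5 * w 1, w 0 + w 1]
  map_add' v w := by ext i; fin_cases i <;> simp <;> ring
  map_smul' a w := by ext i; fin_cases i <;> simp <;> ring
  invFun w := ![(w 1 + 5 * w 2) / 9, (4 * w 2 - w 1) / 9, -w 0 / 3]
  left_inv w := by
    have h9 : (9 : K) ≠ 0 := by convert pow_ne_zero 2 h3 using 1; norm_num
    ext i; fin_cases i <;> simp <;> field_simp <;> ring
  right_inv w := by
    have h9 : (9 : K) ≠ 0 := by convert pow_ne_zero 2 h3 using 1; norm_num
    ext i; fin_cases i <;> simp <;> field_simp <;> ring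

lemma isCoordChange_fermatCoordChange (h3 : (3 : K) ≠ 0) :
    IsCoordChange (fermatCoordChange h3) (fermatCubic K)
      (fermatWeierstrass K).toProjective.polynomial := by
  refine ⟨27, by convert pow_ne_zero 3 h3 using 1; norm_num, fun u v ↦ ?_⟩
  simp [lineRestrict, fermatCubic, fermatCoordChange, fermatWeierstrass,
    WeierstrassCurve.Projective.polynomial, map_ofNat (C : K →+* MvPolynomial (Fin 2) K)]
  ring

/-- The degree zero classes on the Fermat cubic are the points of its Weierstrass model. -/
def H0FermatEquivPoint [DecidableEq K] (h3 : (3 : K) ≠ 0) :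
    H0 (fermatCubic K) ≃+ (fermatWeierstrass K).toAffine.Point :=
  have := isElliptic_fermatWeierstrass h3
  have hT := isCoordChange_fermatCoordChange h3
  (H0Congr _ (hT.tripleRel_iff isHomogeneous_fermatCubic (isHomogeneous_polynomial _))).trans
    (H0EquivPoint _)

end Fermat

/-! ### Two-torsion of an elliptic curve -/

section TwoTorsion

variable {K : Type*} [Field K] {W : WeierstrassCurve K}

lemma mem_torsion_two {A : Type*} [AddCommGroup A] {a : A} : a ∈ torsion 2 A ↔ a = -a := by
  rw [torsion, AddMonoidHom.mem_ker, nsmulAddMonoidHom_apply, two_nsmul, add_eq_zero_iff_eq_neg]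

lemma equation_iff_mem_roots_twoTorsionPolynomial (h2 : (2 : K) ≠ 0) {x y : K}
    (hy : 2 * y + W.a₁ * x + W.a₃ = 0) :
    W.toAffine.Equation x y ↔ x ∈ W.twoTorsionPolynomial.roots := by
  have h4 : (4 : K) ≠ 0 := by convert mul_ne_zero h2 h2 using 1; norm_num
  rw [Cubic.mem_roots_iff (Cubic.ne_zero_of_a_ne_zero h4), WeierstrassCurve.Affine.equation_iff']
  simp only [WeierstrassCurve.twoTorsionPolynomial, WeierstrassCurve.b₂, WeierstrassCurve.b₄,
    WeierstrassCurve.b₆]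
  constructor
  · intro h
    linear_combination -4 * h + (2 * y + W.a₁ * x + W.a₃) * hy
  · intro h
    refine mul_left_cancel₀ h4 ?_
    linear_combination -h + (2 * y + W.a₁ * x + W.a₃) * hy

variable [DecidableEq K]

lemma some_mem_torsion_two_iff {x y : K} (h : W.toAffine.Nonsingular x y) :
    .some x y h ∈ torsion 2 W.toAffine.Point ↔ 2 * y + W.a₁ * x + W.a₃ = 0 := by
  rw [mem_torsion_two, WeierstrassCurve.Affine.Point.neg_some,
    WeierstrassCurve.Affine.Point.some.injEq, WeierstrassCurve.Affine.negY]
  constructor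
  · rintro ⟨-, hy⟩
    linear_combination hy
  · exact fun hy ↦ ⟨rfl, by linear_combination hy⟩

/-- The two-torsion of an elliptic curve in odd characteristic: the point at infinity, and one
point for each root of the two-torsion polynomial. -/
def twoTorsionEquiv [W.IsElliptic] (h2 : (2 : K) ≠ 0) :
    torsion 2 W.toAffine.Point ≃ Option {x // x ∈ W.twoTorsionPolynomial.roots} where
  toFun
    | ⟨0, _⟩ => none
    | ⟨.some x _ h, hy⟩ =>
      some ⟨x, (equation_iff_mem_roots_twoTorsionPolynomial h2
        ((some_mem_torsion_two_iff h).1 hy)).1 h.1⟩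
  invFun
    | none => 0
    | some x =>
      have hy : 2 * (-(W.a₁ * x + W.a₃) / 2) + W.a₁ * x + W.a₃ = 0 := by field_simp; ring
      ⟨.some x (-(W.a₁ * x + W.a₃) / 2) <| WeierstrassCurve.Affine.equation_iff_nonsingular.1
        ((equation_iff_mem_roots_twoTorsionPolynomial h2 hy).2 x.2),
        (some_mem_torsion_two_iff _).2 hy⟩
  left_inv := by
    rintro ⟨_ | ⟨x, y, h⟩, hy⟩
    · rfl
    · rw [some_mem_torsion_two_iff] at hy
      have hy' : -(W.a₁ * x + W.a₃) / 2 = y := by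
        rw [div_eq_iff h2]
        linear_combination -hy
      subst hy'
      rfl
  right_inv := by
    rintro (_ | x) <;> rfl

lemma card_torsion_two [W.IsElliptic] (h2 : (2 : K) ≠ 0)
    (hs : W.twoTorsionPolynomial.toPoly.Splits) :
    Nat.card (torsion 2 W.toAffine.Point) = 4 := by
  have ha : W.twoTorsionPolynomial.a ≠ 0 := by
    rw [WeierstrassCurve.twoTorsionPolynomial]
    convert mul_ne_zero h2 h2 using 1; norm_num
  have hs' : (W.twoTorsionPolynomial.toPoly.map (RingHom.id K)).Splits := by
    rwa [Polynomial.map_id]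
  have hid : W.twoTorsionPolynomial.map (RingHom.id K) = W.twoTorsionPolynomial := rfl
  have hroots := Cubic.card_roots_of_discr_ne_zero ha hs'
    (W.twoTorsionPolynomial_discr_ne_zero_of_isElliptic h2.isUnit)
  rw [hid] at hroots
  simp_rw [Nat.card_congr (twoTorsionEquiv h2), Finite.card_option, ← Multiset.mem_toFinset,
    Nat.card_eq_fintype_card, Fintype.card_coe, hroots]

lemma isAddKleinFour_torsion_two {A : Type*} [AddCommGroup A] (h : Nat.card (torsion 2 A) = 4) :
    IsAddKleinFour (torsion 2 A) where
  card_four := h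
  exponent_two := by
    have hdvd : AddMonoid.exponent (torsion 2 A) ∣ 2 :=
      AddMonoid.exponent_dvd_of_forall_nsmul_eq_zero fun a ↦ Subtype.ext a.2
    refine ((Nat.dvd_prime Nat.prime_two).1 hdvd).resolve_left fun h1 ↦ ?_
    rw [AddMonoid.exp_eq_one_iff] at h1
    rw [Nat.card_of_subsingleton 0] at h
    omega

end TwoTorsion

section FermatTwoTorsion

variable {K : Type*} [Field K]

lemma twoTorsionPolynomial_fermatWeierstrass :
    (fermatWeierstrass K).twoTorsionPolynomial = ⟨4, 0, 0, -27⟩ := by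
  simp only [fermatWeierstrass, WeierstrassCurve.twoTorsionPolynomial, WeierstrassCurve.b₂,
    WeierstrassCurve.b₄, WeierstrassCurve.b₆]
  norm_num

lemma splits_twoTorsionPolynomial_fermatWeierstrass (h2 : (2 : K) ≠ 0) {ω t : K}
    (hω : IsPrimitiveRoot ω 3) (ht : t ^ 3 = 2) :
    (fermatWeierstrass K).twoTorsionPolynomial.toPoly.Splits := by
  have h4 : (4 : K) ≠ 0 := by convert mul_ne_zero h2 h2 using 1; norm_num
  have hroot : (3 / t ^ 2) ^ 3 = (27 / 4 : K) := by
    rw [div_pow, ← pow_mul, mul_comm, pow_mul, ht]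
    norm_num
  have heq : (fermatWeierstrass K).twoTorsionPolynomial.toPoly =
      Polynomial.C 4 * (Polynomial.X ^ 3 - Polynomial.C (27 / 4)) := by
    rw [twoTorsionPolynomial_fermatWeierstrass, Cubic.toPoly, mul_sub, ← Polynomial.C_mul,
      mul_div_cancel₀ _ h4]
    simp only [Polynomial.C_0, zero_mul, add_zero, Polynomial.C_neg, sub_eq_add_neg]
  rw [heq]
  exact (X_pow_sub_C_splits_of_isPrimitiveRoot hω hroot).C_mul _

lemma exists_isPrimitiveRoot_of_card_mod_eq_one [Finite K] {q : ℕ} [Fact q.Prime]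
    (h : Nat.card K % q = 1) : ∃ ω : K, IsPrimitiveRoot ω q := by
  have hdvd : q ∣ Nat.card Kˣ := by
    rw [Nat.card_units, ← h]
    exact Nat.dvd_sub_mod _
  obtain ⟨ω, hω⟩ := exists_prime_orderOf_dvd_card' q hdvd
  exact ⟨ω, IsPrimitiveRoot.coe_units_iff.2 (hω ▸ IsPrimitiveRoot.orderOf ω)⟩

end FermatTwoTorsion

/-! ### Finite groups modulo `p` -/

section ModP

variable {A : Type*} [AddCommGroup A]

lemma natCard_modP [Finite A] (k : ℕ) : Nat.card (ModP k A) = Nat.card (torsion k A) := by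
  let f : A →+ A := nsmulAddMonoidHom k
  change f.range.index = Nat.card f.ker
  exact AddSubgroup.index_range

lemma dimModP_eq_of_natCard_eq_pow {p d : ℕ} [Fact p.Prime]
    (h : Nat.card (ModP p A) = p ^ d) : dimModP p A = d := by
  have : Finite (ModP p A) := Nat.finite_of_card_ne_zero (h ▸ NeZero.ne _)
  have hd : Module.finrank (ZMod p) (ModP p A) = d :=
    Nat.pow_right_injective (Fact.out : p.Prime).two_le
      ((FiniteField.pow_finrank_eq_natCard p _).trans h)
  rw [dimModP, ← Module.finrank_eq_rank, hd]

lemma natCard_torsion_congr {B : Type*} [AddCommGroup B] (e : A ≃+ B) (k : ℕ) :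
    Nat.card (torsion k A) = Nat.card (torsion k B) :=
  Nat.card_congr <| e.toEquiv.subtypeEquiv fun a ↦ by
    simp [torsion, AddMonoidHom.mem_ker, ← map_nsmul]

end ModP

lemma finite_H0 {K : Type*} [Field K] [Finite K] {n : ℕ} {F : MvPolynomial (Fin n) K}
    (hF : F.IsHomogeneous 3) (hn : 3 ≤ n) (O : zeroSet F) : Finite (H0 F) :=
  have := Projectivization.finite_of_finite K (Fin n → K)
  Finite.of_surjective (fun P ↦ H0diff F P O) fun x ↦
    (exists_eq_H0diff hF hn O x).imp fun _ h ↦ h.symm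

end CubicSurf

open CubicSurf MvPolynomial in
theorem pic0_mod_two_of_fermat_cubic_general {K : Type*} [Field K] [Finite K] [DecidableEq K]
    (hK : Nat.card K % 3 = 1) (h2 : (2 : K) ≠ 0) (hcube : ∃ t : K, t ^ 3 = 2)
    (O : zeroSet (fermatCubic K)) :
    dimModP 2 (H0 (fermatCubic K)) = 2 ∧
    (∀ x : ModP 2 (H0 (fermatCubic K)), ∃ P : zeroSet (fermatCubic K),
      x = QuotientAddGroup.mk (H0diff (fermatCubic K) P O)) ∧
    Nonempty (torsion 2 (fermatWeierstrass K).toAffine.Point ≃+ (ZMod 2 × ZMod 2)) := by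
  obtain ⟨t, ht⟩ := hcube
  obtain ⟨ω, hω⟩ := exists_isPrimitiveRoot_of_card_mod_eq_one (K := K) hK
  have h3 : (3 : K) ≠ 0 := mod_cast hω.neZero'.out
  have := isElliptic_fermatWeierstrass h3
  have hcard : Nat.card (torsion 2 (fermatWeierstrass K).toAffine.Point) = 4 :=
    card_torsion_two h2 (splits_twoTorsionPolynomial_fermatWeierstrass h2 hω ht)
  have := finite_H0 isHomogeneous_fermatCubic le_rfl O
  refine ⟨dimModP_eq_of_natCard_eq_pow (d := 2) ?_, ?_, ?_⟩
  · rw [natCard_modP, natCard_torsion_congr (H0FermatEquivPoint h3), hcard]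
    rfl
  · rintro ⟨x⟩
    obtain ⟨P, rfl⟩ := exists_eq_H0diff isHomogeneous_fermatCubic le_rfl O x
    exact ⟨P, rfl⟩
  · have := isAddKleinFour_torsion_two hcard
    exact IsAddKleinFour.nonempty_addEquiv

open CubicSurf MvPolynomial in
/-- Let `p ≡ 1 (mod 3)` be a prime such that `2` is a cube mod `p`,
and let `C_p : x³ + y³ + z³ = 0` over `F_p`, with `O = (1 : -1 : 0)`.  Then
`dim_{F₂} Pic⁰(C_p)/2Pic⁰(C_p) = 2`, every element of `Pic⁰(C_p)/2Pic⁰(C_p)` is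
represented by the class of `P - O` for some `P ∈ C_p(F_p)`, and equivalently the
elliptic curve `E : y² + y = x³ - 7` over `F_p` (a Weierstrass model of `(C_p, O)`)
has full 2-torsion: `E(F_p)[2] ≃ ℤ/2ℤ × ℤ/2ℤ`. -/
theorem pic0_mod_two_of_fermat_cubic
    (p : ℕ) [Fact p.Prime] (hp3 : p % 3 = 1) (hcube : ∃ t : ZMod p, t ^ 3 = 2) :
    dimModP 2 (Pic0C p) = 2 ∧
    (∀ x : ModP 2 (Pic0C p), ∃ P : zeroSet (Gcubic p),
      x = QuotientAddGroup.mk (H0diff (Gcubic p) P (OPt p))) ∧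
    Nonempty ((torsion 2
        (WeierstrassCurve.toAffine ⟨0, 0, 1, 0, -7⟩ : WeierstrassCurve.Affine (ZMod p)).Point)
      ≃+ (ZMod 2 × ZMod 2)) := by
  have h2 : (2 : ZMod p) ≠ 0 := by
    refine Ring.two_ne_zero ?_
    rw [ZMod.ringChar_zmod_n]
    rintro rfl
    omega
  exact pic0_mod_two_of_fermat_cubic_general (by rwa [Nat.card_zmod]) h2 hcube (OPt p)
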